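/- For every positive integer n, the minimum size q(D'_n) of a quasi-kernel of the digraph D'_n satisfies n(n−1) + 1 ≤ q(D'_n) ≤ n² + 1. -/

import Mathlib

/-!
The vertices `k_i` induce a regular tournament, so an independent set `Q` contains at most one of
them. A vertex `s_{ij}` with `i ≥ 1` has `k_i` as its only out-neighbour, and `k_i` sends no arc to
any `s`-vertex; so `s_{ij}` is in `Q` unless `k_i` is in `Q` or beats a `k_m` in `Q`
(`inr_mem_of_quasiKernel`).

Lower bound: if `Q` contains no `k_m`, it contains all `2n²` vertices `s_{ij}` with `i ≥ 1`.
If it contains `k_m`, it contains `s_{ij}` for each of the at least `n - 1` indices `i ≠ 0` among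
the `n` out-neighbours of `k_m`; together with `k_m` this gives `n(n-1) + 1` vertices.

Upper bound: `k_n` together with all `s_{ij}` for `i > n` (the out-neighbours of `k_n` are exactly
`k_{n+1}, …, k_{2n}`) is a quasi-kernel of size `n² + 1`.
-/


def Indep {V : Type*} (A : V → V → Prop) (Q : Finset V) : Prop :=
  ∀ u ∈ Q, ∀ v ∈ Q, u ≠ v → ¬ A u v

def QuasiKernel {V : Type*} (A : V → V → Prop) (Q : Finset V) : Prop :=
  Indep A Q ∧
    ∀ v : V, v ∈ Q ∨ (∃ q ∈ Q, A v q) ∨ (∃ w : V, ∃ q ∈ Q, A v w ∧ A w q)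

abbrev DnVert (n : ℕ) := Fin (2 * n + 1) ⊕ (Fin (2 * n + 1) × Fin n)

def DnArc (n : ℕ) : DnVert n → DnVert n → Prop
  | Sum.inl i, Sum.inl i' =>
      ∃ j : ℕ, 1 ≤ j ∧ j ≤ n ∧ (i' : ℕ) = ((i : ℕ) + j) % (2 * n + 1)
  | Sum.inr p, Sum.inl i' => i' = p.1
  | _, _ => False

/-- Arc relation of `D'_n`, obtained from `D_n` by adding the arcs `(k_0, s_{ij})`
for `1 ≤ i ≤ 2n` and `1 ≤ j ≤ n`. -/
def Dn'Arc (n : ℕ) (u v : DnVert n) : Prop :=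
  DnArc n u v ∨
    ∃ (i : Fin (2 * n + 1)) (p : Fin (2 * n + 1) × Fin n),
      u = Sum.inl i ∧ v = Sum.inr p ∧ (i : ℕ) = 0 ∧ 1 ≤ (p.1 : ℕ)

/-- The minimum size of a quasi-kernel of `D'_n`. -/
noncomputable def qDn' (n : ℕ) : ℕ :=
  sInf {k : ℕ | ∃ Q : Finset (DnVert n), QuasiKernel (Dn'Arc n) Q ∧ Q.card = k}

/-- The arcs among the `k_i`, with the reduction modulo `2n + 1` resolved into linear
inequalities. -/
lemma arc_inl_inl {n : ℕ} (i i' : Fin (2 * n + 1)) :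
    Dn'Arc n (Sum.inl i) (Sum.inl i') ↔
      ((i : ℕ) < i' ∧ (i' : ℕ) ≤ i + n) ∨ (i' : ℕ) + n + 1 ≤ i := by
  have hi := i.isLt
  have hi' := i'.isLt
  simp only [Dn'Arc, DnArc, reduceCtorEq, false_and, and_false, exists_false, or_false]
  constructor
  · rintro ⟨j, h1, h2, h3⟩
    by_cases h : (i : ℕ) + j < 2 * n + 1
    · rw [Nat.mod_eq_of_lt h] at h3
      omega
    · rw [Nat.mod_eq_sub_mod (by omega), Nat.mod_eq_of_lt (by omega)] at h3
      omega
  · rintro (h | h)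
    · refine ⟨i' - i, by omega, by omega, ?_⟩
      rw [Nat.mod_eq_of_lt (by omega)]
      omega
    · refine ⟨i' + (2 * n + 1) - i, by omega, by omega, ?_⟩
      rw [Nat.mod_eq_sub_mod (by omega), Nat.mod_eq_of_lt (by omega)]
      omega

lemma arc_inr_inl {n : ℕ} (p : Fin (2 * n + 1) × Fin n) (i : Fin (2 * n + 1)) :
    Dn'Arc n (Sum.inr p) (Sum.inl i) ↔ i = p.1 := by
  simp [Dn'Arc, DnArc]

lemma arc_inl_inr {n : ℕ} (i : Fin (2 * n + 1)) (p : Fin (2 * n + 1) × Fin n) :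
    Dn'Arc n (Sum.inl i) (Sum.inr p) ↔ (i : ℕ) = 0 ∧ 1 ≤ (p.1 : ℕ) := by
  simp [Dn'Arc, DnArc]

lemma not_arc_inr_inr {n : ℕ} (p q : Fin (2 * n + 1) × Fin n) :
    ¬ Dn'Arc n (Sum.inr p) (Sum.inr q) := by
  simp [Dn'Arc, DnArc]

/-- A vertex `s_{ij}` with `i ≥ 1` lies in every quasi-kernel that neither contains `k_i` nor
meets the out-neighbourhood of `k_i` in the tournament. -/
lemma inr_mem_of_quasiKernel {n : ℕ} {Q : Finset (DnVert n)} (hQ : QuasiKernel (Dn'Arc n) Q)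
    (p : Fin (2 * n + 1) × Fin n) (hp : (p.1 : ℕ) ≠ 0)
    (h : ∀ m, Sum.inl m ∈ Q → p.1 ≠ m ∧ ¬ Dn'Arc n (Sum.inl p.1) (Sum.inl m)) :
    Sum.inr p ∈ Q := by
  rcases hQ.2 (Sum.inr p) with h0 | ⟨q | q, hq, ha⟩ | ⟨w | w, q, hq, ha, hb⟩
  · exact h0
  · exact absurd ((arc_inr_inl _ _).1 ha).symm (h q hq).1
  · exact absurd ha (not_arc_inr_inr _ _)
  · rw [arc_inr_inl] at ha
    subst ha
    rcases q with q | q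
    · exact absurd hb (h q hq).2
    · exact absurd ((arc_inl_inr _ _).1 hb).1 hp
  · exact absurd ha (not_arc_inr_inr _ _)

/-- The index `(m + j + 1) mod (2n + 1)` of the `j`-th out-neighbour of `k_m`, for `0 ≤ j < n`. -/
def outNbr {n : ℕ} (m : Fin (2 * n + 1)) (j : Fin n) : Fin (2 * n + 1) :=
  if h : (m : ℕ) + j + 1 < 2 * n + 1 then ⟨m + j + 1, h⟩
  else ⟨m + j - 2 * n, by omega⟩

lemma outNbr_val {n : ℕ} (m : Fin (2 * n + 1)) (j : Fin n) :
    ((m : ℕ) + j + 1 < 2 * n + 1 ∧ (outNbr m j : ℕ) = m + j + 1) ∨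
      (2 * n + 1 ≤ (m : ℕ) + j + 1 ∧ (outNbr m j : ℕ) = m + j - 2 * n) := by
  unfold outNbr
  split_ifs with h
  · exact Or.inl ⟨h, rfl⟩
  · exact Or.inr ⟨by omega, rfl⟩

lemma outNbr_injective {n : ℕ} (m : Fin (2 * n + 1)) : Function.Injective (outNbr m) := by
  intro a b hab
  have ha := outNbr_val m a
  have hb := outNbr_val m b
  rw [hab] at ha
  ext
  omega

lemma card_lower {n : ℕ} (hn : 1 ≤ n) {Q : Finset (DnVert n)}
    (hQ : QuasiKernel (Dn'Arc n) Q) : n * (n - 1) + 1 ≤ Q.card := by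
  by_cases hK : ∃ m, Sum.inl m ∈ Q
  · obtain ⟨m, hm⟩ := hK
    -- A second `k`-vertex in `Q` would be joined to `k_m` by an arc.
    have huniq : ∀ m', Sum.inl m' ∈ Q → m' = m := by
      intro m' hm'
      by_contra hne
      have h1 := hQ.1 _ hm _ hm' (by simpa using Ne.symm hne)
      have h2 := hQ.1 _ hm' _ hm (by simpa using hne)
      rw [arc_inl_inl] at h1 h2
      have : (m' : ℕ) ≠ m := fun h => hne (Fin.ext h)
      omega
    let O : Finset (Fin (2 * n + 1)) := (Finset.univ.image (outNbr m)).erase 0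
    have hO : n - 1 ≤ O.card := by
      have := Finset.pred_card_le_card_erase (s := Finset.univ.image (outNbr m)) (a := 0)
      rwa [Finset.card_image_of_injective _ (outNbr_injective m), Finset.card_univ,
        Fintype.card_fin] at this
    have hsub : insert (Sum.inl m) ((O ×ˢ (Finset.univ : Finset (Fin n))).map
        ⟨Sum.inr, Sum.inr_injective⟩) ⊆ Q := by
      intro v hv
      rw [Finset.mem_insert, Finset.mem_map] at hv
      rcases hv with rfl | ⟨p, hp, rfl⟩
      · exact hm
      · have hpO := (Finset.mem_product.1 hp).1
        obtain ⟨h0, hp1⟩ := Finset.mem_erase.1 hpO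
        obtain ⟨j, -, hj⟩ := Finset.mem_image.1 hp1
        have hv := outNbr_val m j
        rw [hj] at hv
        refine inr_mem_of_quasiKernel hQ p (fun h => h0 (Fin.ext h)) ?_
        intro m' hm'
        rw [huniq m' hm', arc_inl_inl]
        refine ⟨fun h => ?_, by omega⟩
        rw [h] at hv
        omega
    have hc := Finset.card_le_card hsub
    rw [Finset.card_insert_of_notMem (by simp), Finset.card_map, Finset.card_product,
      Finset.card_univ, Fintype.card_fin] at hc
    nlinarith
  · have hsub : ((Finset.univ.erase (0 : Fin (2 * n + 1))) ×ˢ (Finset.univ : Finset (Fin n))).map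
        ⟨Sum.inr, Sum.inr_injective⟩ ⊆ Q := by
      intro v hv
      obtain ⟨p, hp, rfl⟩ := Finset.mem_map.1 hv
      have h0 := Finset.ne_of_mem_erase (Finset.mem_product.1 hp).1
      exact inr_mem_of_quasiKernel hQ p (fun h => h0 (Fin.ext h)) fun m hm => absurd ⟨m, hm⟩ hK
    have hc := Finset.card_le_card hsub
    rw [Finset.card_map, Finset.card_product, Finset.card_erase_of_mem (Finset.mem_univ _),
      Finset.card_univ, Finset.card_univ, Fintype.card_fin, Fintype.card_fin] at hc
    obtain ⟨k, rfl⟩ := Nat.exists_eq_add_of_le' hn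
    simp only [Nat.add_sub_cancel] at hc ⊢
    nlinarith

/-- The index of the vertex `k_n`. -/
def mid (n : ℕ) : Fin (2 * n + 1) := ⟨n, by omega⟩

/-- The quasi-kernel consisting of `k_n` and all `s_{ij}` with `i > n`. -/
def smallQK (n : ℕ) : Finset (DnVert n) :=
  insert (Sum.inl (mid n))
    ((Finset.Ioi (mid n) ×ˢ (Finset.univ : Finset (Fin n))).map ⟨Sum.inr, Sum.inr_injective⟩)

lemma inl_mem_smallQK {n : ℕ} (i : Fin (2 * n + 1)) :
    Sum.inl i ∈ smallQK n ↔ (i : ℕ) = n := by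
  simp [smallQK, mid, Fin.ext_iff]

lemma inr_mem_smallQK {n : ℕ} (p : Fin (2 * n + 1) × Fin n) :
    Sum.inr p ∈ smallQK n ↔ n < (p.1 : ℕ) := by
  obtain ⟨i, j⟩ := p
  simp [smallQK, mid, Fin.lt_def]

lemma card_smallQK (n : ℕ) : (smallQK n).card = n ^ 2 + 1 := by
  have h : 2 * n + 1 - 1 - n = n := by omega
  rw [smallQK, Finset.card_insert_of_notMem (by simp), Finset.card_map, Finset.card_product,
    Finset.card_univ, Fintype.card_fin, Fin.card_Ioi]
  simp only [mid, h, sq]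

lemma quasiKernel_smallQK {n : ℕ} (hn : 1 ≤ n) : QuasiKernel (Dn'Arc n) (smallQK n) := by
  have hmid : Sum.inl (mid n) ∈ smallQK n := (inl_mem_smallQK _).2 rfl
  have hval : (mid n : ℕ) = n := rfl
  refine ⟨?_, ?_⟩
  · rintro (i | p) hu (i' | p') hv hne
    · rw [inl_mem_smallQK] at hu hv
      exact absurd (congrArg Sum.inl (Fin.ext (hu.trans hv.symm))) hne
    · rw [inl_mem_smallQK] at hu
      rw [arc_inl_inr]
      omega
    · rw [inr_mem_smallQK] at hu
      rw [inl_mem_smallQK] at hv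
      rw [arc_inr_inl, Fin.ext_iff]
      omega
    · exact not_arc_inr_inr _ _
  · rintro (i | p)
    · have hi := i.isLt
      rcases lt_trichotomy (i : ℕ) n with h | h | h
      · exact Or.inr (Or.inl ⟨_, hmid, (arc_inl_inl _ _).2 (by omega)⟩)
      · exact Or.inl ((inl_mem_smallQK _).2 h)
      -- For `i > n`, the path `k_i → k_{i-n-1} → k_n` works, since `i + n ≡ i - n - 1`.
      · let w : Fin (2 * n + 1) := ⟨i - n - 1, by omega⟩
        have hw : (w : ℕ) = i - n - 1 := rfl
        exact Or.inr (Or.inr ⟨Sum.inl w, _, hmid, (arc_inl_inl _ _).2 (by omega),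
          (arc_inl_inl _ _).2 (by omega)⟩)
    · rcases lt_trichotomy (p.1 : ℕ) n with h | h | h
      · exact Or.inr (Or.inr ⟨Sum.inl p.1, _, hmid, (arc_inr_inl _ _).2 rfl,
          (arc_inl_inl _ _).2 (by omega)⟩)
      · exact Or.inr (Or.inl ⟨_, hmid, (arc_inr_inl _ _).2 (Fin.ext h.symm)⟩)
      · exact Or.inl ((inr_mem_smallQK _).2 h)

/-- For every positive integer `n`, `n(n−1) + 1 ≤ q(D'_n) ≤ n² + 1`. -/
theorem stmt8 (n : ℕ) (hn : 1 ≤ n) :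
    n * (n - 1) + 1 ≤ qDn' n ∧ qDn' n ≤ n ^ 2 + 1 := by
  have hmem : n ^ 2 + 1 ∈ {k : ℕ | ∃ Q : Finset (DnVert n),
      QuasiKernel (Dn'Arc n) Q ∧ Q.card = k} :=
    ⟨smallQK n, quasiKernel_smallQK hn, card_smallQK n⟩
  refine ⟨?_, Nat.sInf_le hmem⟩
  -- Nonemptiness guarantees that the infimum is attained and is not the junk value `0`.
  obtain ⟨Q, hQ, hcard⟩ := Nat.sInf_mem ⟨_, hmem⟩
  exact (card_lower hn hQ).trans_eq hcard
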